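/- Let G be a finite simple graph in which every vertex has degree at least 2, and let p be a non-backtracking walk in G of length m. Then p factors through an immersed cycle: there exist a vertex u, a cyclically reduced closed walk c of length n ≥ 3 based at u, and an index t with t + m ≤ n, such that c.getVert (t + k) = p.getVert k for all 0 ≤ k ≤ m. In other words, p occurs as a contiguous subwalk of a cyclically reduced closed walk. (This is the path-cycle extensibility of finite graphs without degree-1 vertices asserted in Remark 2.2.) -/

import Mathlib

open SimpleGraph

/-!
If no vertex has exactly one neighbour, the neighbours of each vertex `v` can be permuted by some
`π_v` without fixed points. The map sending a dart `(u, v)` to `(v, π_v u)` is then an injection on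
darts all of whose moves are non-backtracking. As `π_v` may be chosen to send `u` to any prescribed
neighbour `w ≠ u`, every single non-backtracking move belongs to such an injection. On a finite set
of darts the orbits of an injection are cycles, hence every move can be undone by further moves, and
reachability by non-backtracking moves is symmetric. A walk can therefore be continued from its last
dart back to its first one, which closes it up into a cyclically reduced walk.
-/

section Permutations

variable {α : Type*} {s : Finset α}

theorem exists_perm_forall_mem_ne_apply_eq {x y : α} (hx : x ∈ s) (hy : y ∈ s) (hxy : x ≠ y) :
    ∃ σ : Equiv.Perm α, (∀ z ∈ s, σ z ∈ s ∧ σ z ≠ z) ∧ σ x = y := by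
  -- A power of a cycle on `s` fixes either every point of `s` or none.
  obtain ⟨τ, hτ, -⟩ := s.countable_toSet.exists_cycleOn
  obtain ⟨n, -, hn⟩ := hτ.exists_pow_eq hx hy
  have not_dvd : ¬ s.card ∣ n := fun h ↦ hxy (((hτ.pow_apply_eq hx).2 h).symm.trans hn)
  exact ⟨τ ^ n, fun z hz ↦ ⟨hτ.1.mapsTo.perm_pow n hz, mt (hτ.pow_apply_eq hz).1 not_dvd⟩, hn⟩

theorem exists_perm_forall_mem_ne (hs : s.card ≠ 1) :
    ∃ σ : Equiv.Perm α, ∀ z ∈ s, σ z ∈ s ∧ σ z ≠ z := by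
  obtain rfl | hne := s.eq_empty_or_nonempty
  · exact ⟨1, by simp⟩
  · have : 1 < s.card := by have := hne.card_pos; omega
    obtain ⟨x, hx, y, hy, hxy⟩ := Finset.one_lt_card.1 this
    obtain ⟨σ, hσ, -⟩ := exists_perm_forall_mem_ne_apply_eq hx hy hxy
    exact ⟨σ, hσ⟩

end Permutations

section Relations

open Relation

variable {α : Type*} {r : α → α → Prop}

theorem reflTransGen_iterate {f : α → α} (hf : ∀ x, r x (f x)) (n : ℕ) (x : α) :
    ReflTransGen r x (f^[n] x) := by
  induction n with
  | zero => exact .refl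
  | succ n ih => rw [Function.iterate_succ_apply']; exact ih.tail (hf _)

theorem reflTransGen_apply_self_of_injective [Finite α] {f : α → α} (hinj : f.Injective)
    (hf : ∀ x, r x (f x)) (x : α) : ReflTransGen r (f x) x := by
  obtain ⟨n, hn, hx⟩ := Function.mem_periodicPts.1 (hinj.mem_periodicPts x)
  obtain ⟨k, rfl⟩ := Nat.exists_eq_succ_of_ne_zero hn.ne'
  have hk : f^[k] (f x) = x := hx
  simpa only [hk] using reflTransGen_iterate hf k (f x)

end Relations

section NonBacktracking

variable {V : Type*} {G : SimpleGraph V}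

/-- The dart `e` may follow the dart `d` in a non-backtracking walk: it starts where `d` ends, and
is not the reverse of `d`. -/
def NonBacktrackingAdj (d e : G.Dart) : Prop :=
  G.DartAdj d e ∧ d.fst ≠ e.snd

namespace NonBacktrackingAdj

open Relation

variable [LocallyFinite G] {d e : G.Dart}

theorem exists_injective_apply_eq (hdeg : ∀ v, G.degree v ≠ 1) (h : NonBacktrackingAdj d e) :
    ∃ f : G.Dart → G.Dart, f.Injective ∧ (∀ x, NonBacktrackingAdj x (f x)) ∧ f d = e := by
  obtain ⟨hde, hne⟩ := h
  have exists_perm (v : V) : ∃ σ : Equiv.Perm V,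
      (∀ u ∈ G.neighborFinset v, σ u ∈ G.neighborFinset v ∧ σ u ≠ u) ∧
        (v = d.snd → σ d.fst = e.snd) := by
    by_cases hv : v = d.snd
    · have hd : d.fst ∈ G.neighborFinset v := by simpa [hv] using d.adj.symm
      have he : e.snd ∈ G.neighborFinset v := by
        rw [mem_neighborFinset, hv, hde]
        exact e.adj
      obtain ⟨σ, hσ, hσd⟩ := exists_perm_forall_mem_ne_apply_eq hd he hne
      exact ⟨σ, hσ, fun _ ↦ hσd⟩
    · obtain ⟨σ, hσ⟩ := exists_perm_forall_mem_ne (hdeg v)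
      exact ⟨σ, hσ, fun hv' ↦ absurd hv' hv⟩
  choose π hπ hπd using exists_perm
  have fst_mem (x : G.Dart) : x.fst ∈ G.neighborFinset x.snd := by simpa using x.adj.symm
  have adj_apply (x : G.Dart) : G.Adj x.snd (π x.snd x.fst) := by
    simpa only [mem_neighborFinset] using (hπ x.snd x.fst (fst_mem x)).1
  refine ⟨fun x ↦ ⟨(x.snd, π x.snd x.fst), adj_apply x⟩, fun x y hxy ↦ ?_,
    fun x ↦ ⟨rfl, (hπ x.snd x.fst (fst_mem x)).2.symm⟩, ?_⟩
  · obtain ⟨hsnd, happly⟩ := Prod.ext_iff.1 (congrArg Dart.toProd hxy)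
    dsimp only at hsnd happly
    rw [hsnd, EmbeddingLike.apply_eq_iff_eq] at happly
    exact Dart.ext _ _ (Prod.ext happly hsnd)
  · exact Dart.ext _ _ (Prod.ext hde (hπd d.snd rfl))

theorem reflTransGen_symm [Finite G.Dart] (hdeg : ∀ v, G.degree v ≠ 1)
    (h : ReflTransGen NonBacktrackingAdj d e) : ReflTransGen NonBacktrackingAdj e d := by
  refine reflTransGen_swap.1 (reflTransGen_closed (fun x y hxy ↦ ?_) d e h)
  obtain ⟨f, hinj, hf, rfl⟩ := exists_injective_apply_eq hdeg hxy
  exact reflTransGen_swap.2 (reflTransGen_apply_self_of_injective hinj hf x)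

theorem exists_right (hdeg : ∀ v, G.degree v ≠ 1) (d : G.Dart) :
    ∃ e : G.Dart, NonBacktrackingAdj d e := by
  obtain ⟨σ, hσ⟩ := exists_perm_forall_mem_ne (hdeg d.snd)
  obtain ⟨hmem, hne⟩ := hσ d.fst (by simpa using d.adj.symm)
  exact ⟨⟨(d.snd, σ d.fst), by simpa using hmem⟩, rfl, hne.symm⟩

theorem transGen_symm_of_reflTransGen [Finite G.Dart] (hdeg : ∀ v, G.degree v ≠ 1)
    (h : ReflTransGen NonBacktrackingAdj d e) : TransGen NonBacktrackingAdj e d := by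
  obtain ⟨e', he'⟩ := exists_right hdeg e
  exact .head' he' (reflTransGen_symm hdeg (h.tail he'))

end NonBacktrackingAdj

/-- A non-backtracking (immersed) walk: no two vertices at distance two along the walk agree. -/
def IsNonBacktracking {a b : V} (p : G.Walk a b) : Prop :=
  ∀ k, 1 ≤ k → k ≤ p.length - 1 → p.getVert (k - 1) ≠ p.getVert (k + 1)

namespace IsNonBacktracking

open Relation

variable {a b : V} {p : G.Walk a b}

theorem isChain_darts (hp : IsNonBacktracking p) : p.darts.IsChain NonBacktrackingAdj := by
  refine List.isChain_iff_getElem.2 fun i hi ↦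
    ⟨List.isChain_iff_getElem.1 p.isChain_dartAdj_darts i hi, ?_⟩
  have hlen := p.length_darts
  rw [p.darts_getElem_eq_getVert, p.darts_getElem_eq_getVert]
  exact hp (i + 1) (by omega) (by omega)

theorem reflTransGen_firstDart_lastDart (hp : IsNonBacktracking p) (hnil : ¬ p.Nil) :
    ReflTransGen NonBacktrackingAdj (p.firstDart hnil) (p.lastDart hnil) := by
  have hne : p.darts ≠ [] := by simpa using hnil
  simpa using List.relationReflTransGen_of_exists_isChain p.darts hp.isChain_darts hne

end IsNonBacktracking

theorem isNonBacktracking_concat_iff {a b w : V} {p : G.Walk a b} (h : G.Adj b w) :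
    IsNonBacktracking (p.concat h) ↔ IsNonBacktracking p ∧ p.penultimate ≠ w := by
  have hlen := Walk.length_concat p h
  have getVert_of_le {k : ℕ} (hk : k ≤ p.length) : (p.concat h).getVert k = p.getVert k := by
    rw [Walk.concat_eq_append, Walk.getVert_append', if_pos hk]
  have getVert_last : (p.concat h).getVert (p.length + 1) = w := by
    rw [← hlen, Walk.getVert_length]
  constructor
  · refine fun hc ↦ ⟨fun k hk hk' ↦ ?_, ?_⟩
    · rw [← getVert_of_le (by omega), ← getVert_of_le (by omega)]
      exact hc k hk (by omega)
    · by_cases hnil : p.Nil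
      · cases hnil
        exact h.ne
      · have hne := hc p.length (Walk.not_nil_iff_lt_length.1 hnil) (by omega)
        rwa [getVert_of_le (Nat.sub_le _ _), getVert_last] at hne
  · rintro ⟨hp, hlast⟩ k hk hk'
    rw [getVert_of_le (by omega)]
    obtain rfl | hlt : k = p.length ∨ k < p.length := by omega
    · rwa [getVert_last]
    · rw [getVert_of_le (by omega)]
      exact hp k hk (by omega)

theorem isNonBacktracking_toWalk {a b : V} (h : G.Adj a b) : IsNonBacktracking h.toWalk := by
  intro k hk hk'
  rw [h.length_toWalk] at hk'
  omega

theorem IsNonBacktracking.exists_append_concat {a b : V} {p : G.Walk a b}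
    (hp : IsNonBacktracking p) (hnil : ¬ p.Nil) {e : G.Dart}
    (h : Relation.TransGen NonBacktrackingAdj (p.lastDart hnil) e) :
    ∃ r : G.Walk b e.fst, IsNonBacktracking ((p.append r).concat e.adj) := by
  induction h with
  | @single e he =>
    obtain ⟨⟨x, y⟩, hxy⟩ := e
    obtain ⟨hadj, hne⟩ := he
    obtain rfl : b = x := hadj
    refine ⟨.nil, ?_⟩
    rw [Walk.append_nil]
    exact (isNonBacktracking_concat_iff hxy).2 ⟨hp, hne⟩
  | @tail d e _ he ih =>
    obtain ⟨r, hr⟩ := ih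
    obtain ⟨⟨x, y⟩, hxy⟩ := e
    obtain ⟨rfl, hne⟩ := he
    refine ⟨r.concat d.adj, ?_⟩
    rw [Walk.append_concat, isNonBacktracking_concat_iff, Walk.penultimate_concat]
    exact ⟨hr, hne⟩

/-- A cyclically reduced closed walk (an immersed cycle). The empty walk is excluded, since its
second and its penultimate vertex are both its base point. -/
structure IsCyclicallyReduced {a : V} (c : G.Walk a a) : Prop where
  isNonBacktracking : IsNonBacktracking c
  snd_ne_penultimate : c.snd ≠ c.penultimate

theorem IsCyclicallyReduced.three_le_length {a : V} {c : G.Walk a a}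
    (hc : IsCyclicallyReduced c) : 3 ≤ c.length := by
  by_contra! hlt
  apply hc.snd_ne_penultimate
  obtain h | h : c.length ≤ 1 ∨ c.length = 2 := by omega
  · rw [Walk.snd, Walk.penultimate, Nat.sub_eq_zero_of_le h, c.getVert_of_length_le h,
      c.getVert_zero]
  · rw [Walk.snd, Walk.penultimate, h]

theorem IsNonBacktracking.exists_isCyclicallyReduced_append_of_not_nil
    [LocallyFinite G] [Finite G.Dart] (hdeg : ∀ v, G.degree v ≠ 1) {a b : V} {p : G.Walk a b}
    (hp : IsNonBacktracking p) (hnil : ¬ p.Nil) :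
    ∃ r : G.Walk b a, IsCyclicallyReduced (p.append r) := by
  have hreach := NonBacktrackingAdj.transGen_symm_of_reflTransGen hdeg
    (hp.reflTransGen_firstDart_lastDart hnil)
  obtain ⟨r, hr⟩ : ∃ r : G.Walk b a, IsNonBacktracking ((p.append r).concat (p.adj_snd hnil)) :=
    hp.exists_append_concat hnil hreach
  obtain ⟨hnb, hne⟩ := (isNonBacktracking_concat_iff _).1 hr
  have hsnd : (p.append r).snd = p.snd := by
    have hpos : 1 ≤ p.length := Walk.not_nil_iff_lt_length.1 hnil
    rw [Walk.snd, Walk.getVert_append', if_pos hpos]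
  exact ⟨r, hnb, by rw [hsnd]; exact hne.symm⟩

theorem IsNonBacktracking.exists_isCyclicallyReduced_append [LocallyFinite G] [Finite G.Dart]
    (hdeg : ∀ v, G.degree v ≠ 1) {a b : V} (ha : 0 < G.degree a) {p : G.Walk a b}
    (hp : IsNonBacktracking p) : ∃ r : G.Walk b a, IsCyclicallyReduced (p.append r) := by
  by_cases hnil : p.Nil
  · cases hnil
    obtain ⟨w, h⟩ := (G.degree_pos_iff_exists_adj a).1 ha
    obtain ⟨r, hr⟩ := (isNonBacktracking_toWalk h).exists_isCyclicallyReduced_append_of_not_nil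
      hdeg Walk.not_nil_cons
    exact ⟨h.toWalk.append r, hr⟩
  · exact hp.exists_isCyclicallyReduced_append_of_not_nil hdeg hnil

end NonBacktracking

/-- Path-cycle extensibility of finite graphs with all degrees at least 2: every
non-backtracking walk occurs as a contiguous subwalk of some cyclically reduced
closed walk of length at least 3. -/
theorem nonBacktracking_walk_factors_through_immersed_cycle {V : Type*}
    [Fintype V] {G : SimpleGraph V} [DecidableRel G.Adj]
    (hdeg : ∀ v : V, 2 ≤ G.degree v) {a b : V} {m : ℕ}
    (p : G.Walk a b) (hp : p.length = m)
    (hnb : ∀ k, 1 ≤ k → k ≤ m - 1 → p.getVert (k - 1) ≠ p.getVert (k + 1)) :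
    ∃ (u : V) (c : G.Walk u u) (n t : ℕ),
      c.length = n ∧ 3 ≤ n ∧
      (∀ k, 1 ≤ k → k ≤ n - 1 → c.getVert (k - 1) ≠ c.getVert (k + 1)) ∧
      c.getVert 1 ≠ c.getVert (n - 1) ∧
      t + m ≤ n ∧
      (∀ k ≤ m, c.getVert (t + k) = p.getVert k) := by
  subst hp
  have hp : IsNonBacktracking p := hnb
  have hdeg_ne_one (v : V) : G.degree v ≠ 1 := Nat.ne_of_gt (hdeg v)
  have hdeg_pos : 0 < G.degree a := two_pos.trans_le (hdeg a)
  obtain ⟨r, hc⟩ := hp.exists_isCyclicallyReduced_append hdeg_ne_one hdeg_pos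
  refine ⟨a, p.append r, _, 0, rfl, hc.three_le_length, hc.isNonBacktracking,
    hc.snd_ne_penultimate, ?_, fun k hk ↦ ?_⟩
  · rw [Walk.length_append]
    omega
  · rw [zero_add, Walk.getVert_append', if_pos hk]
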